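/- arXiv:2003.10335 — 2 statements merged into one kernel-verified Lean document; each statement's English description precedes it below -/
import Mathlib

section
/- Call x ∈ F^{21} (an F-coloring of the 5-element subsets of {1,…,7}) a permitted coloring of ∂Δ⁶ if for every p ∈ {1,…,7}, writing {1,…,7}\{p} = {q₁ < q₂ < q₃ < q₄ < q₅ < q₆}, one has (x(u_{q₁}^p), x(u_{q₂}^p), x(u_{q₃}^p)) · A^{(p)}[(q₁,q₂,q₃)→(q₄,q₅,q₆)] = (x(u_{q₄}^p), x(u_{q₅}^p), x(u_{q₆}^p)). Then the set of permitted colorings of ∂Δ⁶ is an F-linear subspace of F^{21} of dimension exactly 6, and it coincides with the span of the 21 edge vectors e_{ab}, {a,b} ⊆ {1,…,7}. -/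
/-- The determinant `d_{ijk}` built from the columns `(α_i,β_i,γ_i)`, `(α_j,β_j,γ_j)`,
`(α_k,β_k,γ_k)`. -/
noncomputable def dd {F : Type*} [Field F] (al be ga : Fin 7 → F) (i j k : Fin 7) : F :=
  Matrix.det !![al i, al j, al k; be i, be j, be k; ga i, ga j, ga k]

/-- The ansatz matrix `A^{(p)}[(i₁,i₂,i₃)→(o₁,o₂,o₃)]`. -/
noncomputable def ansatz {F : Type*} [Field F] (al be ga : Fin 7 → F) (p : Fin 7)
    (inp out : Fin 3 → Fin 7) : Matrix (Fin 3) (Fin 3) F := fun a b =>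
  dd al be ga (inp (a + 1)) (out b) p * dd al be ga (inp (a + 2)) (out b) p /
    (dd al be ga (inp a) (inp (a + 1)) p * dd al be ga (inp a) (inp (a + 2)) p)

/-- The 5-element subsets of `{1,…,7}` (pentachora of `∂Δ⁶`); there are 21 of them, so
functions `Pent → F` form `F^{21}`. -/
def Pent : Type := {u : Finset (Fin 7) // u.card = 5}

/-- The edge vector `e_{ab}` evaluated at a subset `u ⊆ {1,…,7}`. -/
noncomputable def eVec {F : Type*} [Field F] (al be ga : Fin 7 → F) (a b : Fin 7)
    (u : Finset (Fin 7)) : F :=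
  if a ∈ u ∧ b ∈ u then
    dd al be ga a ((uᶜ.sort (· ≤ ·)).getD 0 a) ((uᶜ.sort (· ≤ ·)).getD 1 a) *
      dd al be ga b ((uᶜ.sort (· ≤ ·)).getD 0 a) ((uᶜ.sort (· ≤ ·)).getD 1 a)
  else 0

/-- `qs p` enumerates `{1,…,7} \ {p}` in increasing order: `q₁ < q₂ < ⋯ < q₆`. -/
def qs (p : Fin 7) (n : Fin 6) : Fin 7 :=
  if (n : ℕ) < (p : ℕ) then ⟨(n : ℕ), by have := n.isLt; omega⟩
  else ⟨(n : ℕ) + 1, by have := n.isLt; omega⟩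

lemma qs_ne (p : Fin 7) (n : Fin 6) : qs p n ≠ p := by
  unfold qs
  split <;> (intro h; have := congrArg Fin.val h; simp at this; omega)

/-- `u_q^p := {1,…,7} \ {p,q}` as a pentachoron. -/
def uPent (p q : Fin 7) (h : q ≠ p) : Pent :=
  ⟨({p, q} : Finset (Fin 7))ᶜ, by
    rw [Finset.card_compl, Finset.card_pair (Ne.symm h)]
    decide⟩

/-- `x : Pent → F` is a permitted coloring of `∂Δ⁶` if for every `p`, writing
`{1,…,7} \ {p} = {q₁ < ⋯ < q₆}`, the row `(x(u_{q₁}^p), x(u_{q₂}^p), x(u_{q₃}^p))` is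
carried by `A^{(p)}[(q₁,q₂,q₃)→(q₄,q₅,q₆)]` to `(x(u_{q₄}^p), x(u_{q₅}^p), x(u_{q₆}^p))`. -/
noncomputable def Permitted {F : Type*} [Field F] (al be ga : Fin 7 → F)
    (x : Pent → F) : Prop :=
  ∀ p : Fin 7,
    Matrix.vecMul
        (fun n : Fin 3 => x (uPent p (qs p ⟨(n : ℕ), by have := n.isLt; omega⟩)
          (qs_ne p _)))
        (ansatz al be ga p
          (fun n : Fin 3 => qs p ⟨(n : ℕ), by have := n.isLt; omega⟩)
          (fun n : Fin 3 => qs p ⟨(n : ℕ) + 3, by have := n.isLt; omega⟩)) =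
      fun n : Fin 3 => x (uPent p (qs p ⟨(n : ℕ) + 3, by have := n.isLt; omega⟩)
        (qs_ne p _))

lemma dd_expand {F : Type*} [Field F] (al be ga : Fin 7 → F) (i j k : Fin 7) :
    dd al be ga i j k = al i * be j * ga k - al i * be k * ga j - al j * be i * ga k
      + al j * be k * ga i + al k * be i * ga j - al k * be j * ga i := by
  unfold dd
  rw [Matrix.det_fin_three]
  simp

lemma sort_pair_aux : ∀ p q : Fin 7, q ≠ p →
    (({p, q} : Finset (Fin 7)).sort (· ≤ ·) = [p, q] ∨
     ({p, q} : Finset (Fin 7)).sort (· ≤ ·) = [q, p]) := by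
  intro p q h
  have hl := Finset.length_sort (s := ({p, q} : Finset (Fin 7))) (· ≤ ·)
  rw [Finset.card_pair (Ne.symm h)] at hl
  have hn := Finset.sort_nodup ({p, q} : Finset (Fin 7)) (· ≤ ·)
  have hm := fun a => Finset.mem_sort (s := ({p, q} : Finset (Fin 7))) (· ≤ ·) (a := a)
  generalize ({p, q} : Finset (Fin 7)).sort (· ≤ ·) = l at *
  match l, hl with
  | [a, b], _ =>
    have h1 := (hm a).1 (by simp)
    have h2 := (hm b).1 (by simp)
    simp at h1 h2 hn
    grind

lemma eVec_uPent {F : Type*} [Field F] (al be ga : Fin 7 → F) (a b p q : Fin 7) (h : q ≠ p) :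
    eVec al be ga a b (uPent p q h).1 = dd al be ga a q p * dd al be ga b q p := by
  unfold eVec uPent
  simp only [compl_compl, Finset.mem_compl, Finset.mem_insert, Finset.mem_singleton]
  split_ifs with hc
  · rcases sort_pair_aux p q h with e | e <;> rw [e] <;> simp [dd_expand] <;> ring
  · have : a = p ∨ a = q ∨ b = p ∨ b = q := by tauto
    rcases this with e | e | e | e <;> subst e <;> simp only [dd_expand] <;> ring

lemma plucker {F : Type*} [Field F] (al be ga : Fin 7 → F) (p a i j o : Fin 7)
    (h : dd al be ga i j p ≠ 0) :
    dd al be ga a o p = (dd al be ga a i p * dd al be ga o j p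
      + dd al be ga a j p * dd al be ga i o p) / dd al be ga i j p := by
  rw [eq_div_iff h]
  simp only [dd_expand]
  ring

lemma dd_swap {F : Type*} [Field F] (al be ga : Fin 7 → F) (i j k : Fin 7) :
    dd al be ga i j k = - dd al be ga j i k := by
  simp only [dd_expand]; ring

lemma lagrange {F : Type*} [Field F] (al be ga : Fin 7 → F) (p a b i j k o : Fin 7)
    (hij : dd al be ga i j p ≠ 0) (hik : dd al be ga i k p ≠ 0) (hjk : dd al be ga j k p ≠ 0) :
    (dd al be ga a i p * dd al be ga b i p) *
        (dd al be ga j o p * dd al be ga k o p / (dd al be ga i j p * dd al be ga i k p)) +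
    (dd al be ga a j p * dd al be ga b j p) *
        (dd al be ga k o p * dd al be ga i o p / (dd al be ga j k p * dd al be ga j i p)) +
    (dd al be ga a k p * dd al be ga b k p) *
        (dd al be ga i o p * dd al be ga j o p / (dd al be ga k i p * dd al be ga k j p))
    = dd al be ga a o p * dd al be ga b o p := by
  rw [plucker al be ga p a i j o hij, plucker al be ga p b i j o hij,
    plucker al be ga p a i j k hij, plucker al be ga p b i j k hij,
    plucker al be ga p k i j o hij]
  rw [dd_swap al be ga j i, dd_swap al be ga k i, dd_swap al be ga k j, dd_swap al be ga o j]
  field_simp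
  ring

lemma permitted_iff {F : Type*} [Field F] (al be ga : Fin 7 → F) (x : Pent → F) :
    Permitted al be ga x ↔ ∀ p : Fin 7, ∀ n : Fin 3,
      ∑ m : Fin 3, x (uPent p (qs p ⟨(m : ℕ), by have := m.isLt; omega⟩) (qs_ne p _)) *
        ansatz al be ga p
          (fun n : Fin 3 => qs p ⟨(n : ℕ), by have := n.isLt; omega⟩)
          (fun n : Fin 3 => qs p ⟨(n : ℕ) + 3, by have := n.isLt; omega⟩) m n
      = x (uPent p (qs p ⟨(n : ℕ) + 3, by have := n.isLt; omega⟩) (qs_ne p _)) := by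
  unfold Permitted
  simp only [funext_iff, Matrix.vecMul, dotProduct]

lemma qs_inj (p : Fin 7) (m n : Fin 6) (h : m ≠ n) : qs p m ≠ qs p n := by
  revert p m n; decide

lemma qs_surj (p q : Fin 7) (h : q ≠ p) : ∃ n, qs p n = q := by
  revert p q; decide

lemma eVec_permitted {F : Type*} [Field F] (al be ga : Fin 7 → F)
    (hgen : ∀ i j k : Fin 7, i ≠ j → i ≠ k → j ≠ k → dd al be ga i j k ≠ 0) (a b : Fin 7) :
    Permitted al be ga (fun u => eVec al be ga a b u.1) := by
  rw [permitted_iff]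
  intro p n
  simp only [eVec_uPent, ansatz]
  rw [Fin.sum_univ_three]
  have hd : ∀ m n : Fin 6, m ≠ n → dd al be ga (qs p m) (qs p n) p ≠ 0 := fun m n h =>
    hgen _ _ _ (qs_inj p m n h) (qs_ne p m) (qs_ne p n)
  exact lagrange al be ga p a b (qs p 0) (qs p 1) (qs p 2) (qs p ⟨n + 3, by omega⟩)
    (hd _ _ (by decide)) (hd _ _ (by decide)) (hd _ _ (by decide))

/-- The submodule of permitted colorings. -/
noncomputable def permSub {F : Type*} [Field F] (al be ga : Fin 7 → F) :
    Submodule F (Pent → F) where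
  carrier := {x | Permitted al be ga x}
  zero_mem' := by
    simp [permitted_iff]
  add_mem' := by
    intro x y hx hy
    simp only [Set.mem_setOf_eq, permitted_iff] at *
    intro p n
    simp only [Pi.add_apply, add_mul, Finset.sum_add_distrib, hx p n, hy p n]
  smul_mem' := by
    intro c x hx
    simp only [Set.mem_setOf_eq, permitted_iff] at *
    intro p n
    simp only [Pi.smul_apply, smul_eq_mul, mul_assoc, ← Finset.mul_sum, hx p n]

lemma mem_permSub {F : Type*} [Field F] (al be ga : Fin 7 → F) (x : Pent → F) :
    x ∈ permSub al be ga ↔ Permitted al be ga x := Iff.rfl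

lemma uPent_comm (p q : Fin 7) (h : q ≠ p) : uPent p q h = uPent q p h.symm := by
  apply Subtype.ext
  simp only [uPent, Finset.pair_comm]

lemma exists_uPent (u : Pent) : ∃ p q h, u = uPent p q h := by
  obtain ⟨u, hu⟩ := u
  have : uᶜ.card = 2 := by rw [Finset.card_compl, hu]; rfl
  obtain ⟨p, q, h, e⟩ := Finset.card_eq_two.1 this
  refine ⟨p, q, h.symm, Subtype.ext ?_⟩
  simp [uPent, ← e]

lemma vanish_of_three {F : Type*} [Field F] (al be ga : Fin 7 → F) (x : Pent → F)
    (hx : Permitted al be ga x) (p : Fin 7)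
    (h : ∀ m : Fin 3, x (uPent p (qs p ⟨(m : ℕ), by have := m.isLt; omega⟩) (qs_ne p _)) = 0)
    (q : Fin 7) (hq : q ≠ p) : x (uPent p q hq) = 0 := by
  rw [permitted_iff] at hx
  obtain ⟨n, rfl⟩ := qs_surj p q hq
  by_cases hn : (n : ℕ) < 3
  · exact h ⟨n, hn⟩
  · have := hx p ⟨n - 3, by omega⟩
    simp only [h, zero_mul, Finset.sum_const_zero] at this
    have e : (⟨(n : ℕ) - 3 + 3, by omega⟩ : Fin 6) = n := Fin.ext (by simp; omega)
    simp only [e] at this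
    exact this.symm

lemma vanish_of_six {F : Type*} [Field F] (al be ga : Fin 7 → F) (x : Pent → F)
    (hx : Permitted al be ga x)
    (h : ∀ p q : Fin 7, ∀ hq : q ≠ p, p < q → q < 4 → x (uPent p q hq) = 0) : x = 0 := by
  have h' : ∀ p q : Fin 7, ∀ hq : q ≠ p, p < 4 → q < 4 → x (uPent p q hq) = 0 := by
    intro p q hq hp hq4
    rcases lt_or_gt_of_ne hq with l | l
    · rw [uPent_comm]; exact h q p _ l hp
    · exact h p q _ l hq4
  have h1 : ∀ p q : Fin 7, ∀ hq : q ≠ p, p < 4 → x (uPent p q hq) = 0 := by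
    intro p q hq hp
    refine vanish_of_three al be ga x hx p (fun m => h' _ _ _ hp ?_) q hq
    clear hq; revert p m; decide
  have h2 : ∀ p q : Fin 7, ∀ hq : q ≠ p, x (uPent p q hq) = 0 := by
    intro p q hq
    by_cases hp : p < 4
    · exact h1 p q hq hp
    refine vanish_of_three al be ga x hx p (fun m => ?_) q hq
    rw [uPent_comm]
    refine h1 _ _ _ ?_
    clear hq; revert p m; decide
  funext u
  obtain ⟨p, q, hq, rfl⟩ := exists_uPent u
  exact h2 p q hq

/-- First and second endpoints of the six edges of the tetrahedron on the first four vertices. -/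
def edA : Fin 6 → Fin 7 := ![0, 0, 0, 1, 1, 2]
/-- Second endpoints. -/
def edB : Fin 6 → Fin 7 := ![1, 2, 3, 2, 3, 3]

lemma edAB (i : Fin 6) : edB i ≠ edA i := by revert i; decide

/-- The pentachoron complementary to the edge opposite to edge `i`. -/
def edU (i : Fin 6) : Pent := uPent (edA i.rev) (edB i.rev) (edAB _)

/-- The six chosen edge vectors. -/
noncomputable def edV {F : Type*} [Field F] (al be ga : Fin 7 → F) (i : Fin 6) : Pent → F :=
  fun u => eVec al be ga (edA i) (edB i) u.1

lemma edV_ne {F : Type*} [Field F] (al be ga : Fin 7 → F) (i j : Fin 6) (h : i ≠ j) :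
    edV al be ga i (edU j) = 0 := by
  simp only [edV, edU, eVec_uPent]
  have : edA i = edA j.rev ∨ edA i = edB j.rev ∨ edB i = edA j.rev ∨ edB i = edB j.rev := by
    revert i j; decide
  rcases this with e | e | e | e <;> rw [e] <;> simp only [dd_expand] <;> ring

lemma edV_self {F : Type*} [Field F] (al be ga : Fin 7 → F)
    (hgen : ∀ i j k : Fin 7, i ≠ j → i ≠ k → j ≠ k → dd al be ga i j k ≠ 0) (i : Fin 6) :
    edV al be ga i (edU i) ≠ 0 := by
  simp only [edV, edU, eVec_uPent]
  apply mul_ne_zero <;> apply hgen <;> revert i <;> decide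

lemma vanish_edU {F : Type*} [Field F] (al be ga : Fin 7 → F) (x : Pent → F)
    (hx : Permitted al be ga x) (h : ∀ i, x (edU i) = 0) : x = 0 := by
  refine vanish_of_six al be ga x hx ?_
  intro p q hq hpq hq4
  have : ∃ i : Fin 6, edA i.rev = p ∧ edB i.rev = q := by
    clear hx h x hq
    revert p q; decide
  obtain ⟨i, rfl, rfl⟩ := this
  exact h i

/-- Combination of the six chosen edge vectors with prescribed values. -/
noncomputable def comb {F : Type*} [Field F] (al be ga : Fin 7 → F) (c : Fin 6 → F) : Pent → F :=
  ∑ i, (c i / edV al be ga i (edU i)) • edV al be ga i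

lemma comb_edU {F : Type*} [Field F] (al be ga : Fin 7 → F)
    (hgen : ∀ i j k : Fin 7, i ≠ j → i ≠ k → j ≠ k → dd al be ga i j k ≠ 0)
    (c : Fin 6 → F) (j : Fin 6) : comb al be ga c (edU j) = c j := by
  unfold comb
  rw [Finset.sum_apply, Finset.sum_eq_single j]
  · simp only [Pi.smul_apply, smul_eq_mul]
    exact div_mul_cancel₀ _ (edV_self al be ga hgen j)
  · intro i _ hi
    simp [edV_ne al be ga i j hi]
  · simp

/-- The permitted colorings of `∂Δ⁶` form an `F`-linear subspace of `F^{21}` of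
dimension exactly 6, which coincides with the span of the 21 edge vectors. -/
theorem permitted_colorings_eq_span_edgeVectors {F : Type*} [Field F]
    (al be ga : Fin 7 → F)
    (hgen : ∀ i j k : Fin 7, i ≠ j → i ≠ k → j ≠ k → dd al be ga i j k ≠ 0) :
    ∃ S : Submodule F (Pent → F),
      (∀ x : Pent → F, x ∈ S ↔ Permitted al be ga x) ∧
      Module.finrank F S = 6 ∧
      S = Submodule.span F
        {v : Pent → F | ∃ a b : Fin 7, a ≠ b ∧ v = fun u => eVec al be ga a b u.1} := by
  have hle : Submodule.span F
        {v : Pent → F | ∃ a b : Fin 7, a ≠ b ∧ v = fun u => eVec al be ga a b u.1}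
        ≤ permSub al be ga := by
    rw [Submodule.span_le]
    rintro v ⟨a, b, -, rfl⟩
    exact eVec_permitted al be ga hgen a b
  have hcomb : ∀ c, comb al be ga c ∈ Submodule.span F
        {v : Pent → F | ∃ a b : Fin 7, a ≠ b ∧ v = fun u => eVec al be ga a b u.1} := by
    intro c
    refine Submodule.sum_mem _ fun i _ => Submodule.smul_mem _ _ (Submodule.subset_span ?_)
    exact ⟨edA i, edB i, (edAB i).symm, rfl⟩
  refine ⟨permSub al be ga, mem_permSub al be ga, ?_, le_antisymm ?_ hle⟩
  · let ev : permSub al be ga →ₗ[F] (Fin 6 → F) :=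
      { toFun := fun x i => x.1 (edU i)
        map_add' := fun _ _ => rfl
        map_smul' := fun _ _ => rfl }
    have hinj : Function.Injective ev := by
      rw [injective_iff_map_eq_zero]
      intro x hx
      exact Subtype.ext (vanish_edU al be ga x.1 x.2 (fun i => congrFun hx i))
    have hsurj : Function.Surjective ev := fun c =>
      ⟨⟨comb al be ga c, hle (hcomb c)⟩, funext fun j => comb_edU al be ga hgen c j⟩
    rw [(LinearEquiv.ofBijective ev ⟨hinj, hsurj⟩).finrank_eq, Module.finrank_fin_fun]
  · intro x hx
    have h0 := vanish_edU al be ga (x - comb al be ga (fun i => x (edU i)))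
      ((permSub al be ga).sub_mem hx (hle (hcomb _)))
      (fun i => by rw [Pi.sub_apply, comb_edU al be ga hgen, sub_self])
    rw [sub_eq_zero.1 h0]
    exact hcomb _
end

section
/- Fix p ∈ {1,…,7} and an ordered partition of {1,…,7}\{p} into an input triple (i₁,i₂,i₃) and an output triple (o₁,o₂,o₃), and set A := A^{(p)}[(i₁,i₂,i₃)→(o₁,o₂,o₃)]. For each edge {a,b} ⊆ {1,…,7}\{p}, consider the restriction vector r_{ab} := (e_{ab}(u_{i₁}^p), e_{ab}(u_{i₂}^p), e_{ab}(u_{i₃}^p), e_{ab}(u_{o₁}^p), e_{ab}(u_{o₂}^p), e_{ab}(u_{o₃}^p)) ∈ F⁶. Then the F-span of the vectors r_{ab} over all such edges is exactly the 3-dimensional subspace {(v, v·A) : v ∈ F³} ⊆ F⁶ (the graph of the linear map defined by A); in particular, the restrictions of the edge vectors to one 5-simplex span the whole 3-dimensional space of its permitted colorings. -/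
/-- `u_q^p := {1,…,7} \ {p,q}`. -/
def uComp (p q : Fin 7) : Finset (Fin 7) := ({p, q} : Finset (Fin 7))ᶜ

lemma aux_eVec {F : Type*} [Field F] (al be ga : Fin 7 → F) (a b p q : Fin 7) (hpq : p ≠ q) :
    eVec al be ga a b (uComp p q) = dd al be ga a q p * dd al be ga b q p := by
  have hc : (uComp p q)ᶜ = {p, q} := by simp [uComp]
  have hperm : (({p, q} : Finset (Fin 7)).sort (· ≤ ·)).Perm [p, q] := by
    apply Multiset.coe_eq_coe.1
    rw [Finset.sort_eq, Finset.insert_val_of_notMem (by simpa using hpq)]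
    rfl
  have hl : (({p, q} : Finset (Fin 7)).sort (· ≤ ·)) = [p, q] ∨
      (({p, q} : Finset (Fin 7)).sort (· ≤ ·)) = [q, p] := by
    have h2 := hperm.length_eq
    obtain ⟨x, y, hxy⟩ := List.length_eq_two.1 (h2.trans rfl)
    rw [hxy] at hperm ⊢
    have hx : x ∈ [p, q] := hperm.subset (by simp)
    have hy : y ∈ [p, q] := hperm.subset (by simp)
    have hn : [x, y].Nodup := hperm.nodup_iff.2 (by simpa using hpq)
    simp at hx hy hn ⊢
    grind
  unfold eVec
  rw [hc]
  by_cases hm : a ∈ uComp p q ∧ b ∈ uComp p q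
  · rw [if_pos hm]
    rcases hl with h | h <;> rw [h] <;> simp [dd, Matrix.det_fin_three] <;> ring
  · rw [if_neg hm]
    have : a = p ∨ a = q ∨ b = p ∨ b = q := by
      simp [uComp] at hm
      tauto
    rcases this with h | h | h | h <;> subst h <;> simp [dd, Matrix.det_fin_three]
    all_goals first | (left; ring) | (right; ring)

lemma aux_pl {F : Type*} [Field F] (al be ga : Fin 7 → F) (x o y z p : Fin 7)
    (h : dd al be ga y z p ≠ 0) :
    dd al be ga x o p = (dd al be ga o z p / dd al be ga y z p) * dd al be ga x y p +
      (dd al be ga y o p / dd al be ga y z p) * dd al be ga x z p := by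
  field_simp
  simp [dd, Matrix.det_fin_three]
  ring

lemma aux_swap {F : Type*} [Field F] (al be ga : Fin 7 → F) (x y p : Fin 7) :
    dd al be ga x y p = - dd al be ga y x p := by
  simp [dd, Matrix.det_fin_three]
  ring

lemma aux_interp {F : Type*} [Field F] (al be ga : Fin 7 → F) (a b o i j k p : Fin 7)
    (h1 : dd al be ga i j p ≠ 0) (h2 : dd al be ga i k p ≠ 0) (h3 : dd al be ga j k p ≠ 0) :
    dd al be ga a o p * dd al be ga b o p =
      dd al be ga a i p * dd al be ga b i p * (dd al be ga j o p * dd al be ga k o p /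
        (dd al be ga i j p * dd al be ga i k p)) +
      dd al be ga a j p * dd al be ga b j p * (dd al be ga k o p * dd al be ga i o p /
        (dd al be ga j k p * dd al be ga j i p)) +
      dd al be ga a k p * dd al be ga b k p * (dd al be ga i o p * dd al be ga j o p /
        (dd al be ga k i p * dd al be ga k j p)) := by
  have e1 := aux_pl al be ga a o i j p h1
  have e2 := aux_pl al be ga b o i j p h1
  have e3 := aux_pl al be ga a k i j p h1
  have e4 := aux_pl al be ga b k i j p h1
  have e5 := aux_pl al be ga k o i j p h1
  rw [e1, e2, e3, e4, e5, aux_swap al be ga j i, aux_swap al be ga k i,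
    aux_swap al be ga k j, aux_swap al be ga o j]
  generalize dd al be ga i j p = D at *
  generalize dd al be ga i k p = X at *
  generalize dd al be ga j k p = Y at *
  field_simp
  ring

/-- The graph parametrization as a linear map. -/
noncomputable def auxG {F : Type*} [Field F] (A : Matrix (Fin 3) (Fin 3) F) :
    (Fin 3 → F) →ₗ[F] (Fin 6 → F) where
  toFun v := Fin.append v (Matrix.vecMul v A)
  map_add' v w := by
    rw [Matrix.add_vecMul]
    ext n
    refine Fin.addCases (m := 3) (n := 3) (fun i => ?_) (fun i => ?_) n <;> simp [-Fin.natAdd_eq_addNat]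
  map_smul' c v := by
    rw [Matrix.smul_vecMul]
    ext n
    refine Fin.addCases (m := 3) (n := 3) (fun i => ?_) (fun i => ?_) n <;> simp [-Fin.natAdd_eq_addNat]

/-- The span of the restriction vectors
`r_{ab} = (e_{ab}(u_{i₁}^p), e_{ab}(u_{i₂}^p), e_{ab}(u_{i₃}^p), e_{ab}(u_{o₁}^p),
e_{ab}(u_{o₂}^p), e_{ab}(u_{o₃}^p))`, over all edges `{a,b} ⊆ {1,…,7} \ {p}`, is
exactly the graph `{(v, v·A) : v ∈ F³} ⊆ F⁶` of the ansatz matrix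
`A = A^{(p)}[(i₁,i₂,i₃)→(o₁,o₂,o₃)]`. -/
theorem edgeVector_restrictions_span_graph {F : Type*} [Field F] (al be ga : Fin 7 → F)
    (hgen : ∀ i j k : Fin 7, i ≠ j → i ≠ k → j ≠ k → dd al be ga i j k ≠ 0)
    (p : Fin 7) (inp out : Fin 3 → Fin 7)
    (hpart : ({p, inp 0, inp 1, inp 2, out 0, out 1, out 2} : Finset (Fin 7)) =
      Finset.univ) :
    (Submodule.span F
        {w : Fin 6 → F | ∃ a b : Fin 7, a ≠ b ∧ a ≠ p ∧ b ≠ p ∧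
          w = fun n : Fin 6 =>
            if h : (n : ℕ) < 3 then eVec al be ga a b (uComp p (inp ⟨(n : ℕ), h⟩))
            else eVec al be ga a b
              (uComp p (out ⟨(n : ℕ) - 3, by have := n.isLt; omega⟩))} :
      Set (Fin 6 → F)) =
    {w : Fin 6 → F | ∃ v : Fin 3 → F,
      w = Fin.append v (Matrix.vecMul v (ansatz al be ga p inp out))} := by
  have hinj : Function.Injective ![p, inp 0, inp 1, inp 2, out 0, out 1, out 2] := by
    apply Finite.injective_iff_surjective.2
    intro x
    have hx : x ∈ ({p, inp 0, inp 1, inp 2, out 0, out 1, out 2} : Finset (Fin 7)) := by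
      rw [hpart]; simp
    simp only [Finset.mem_insert, Finset.mem_singleton] at hx
    rcases hx with h | h | h | h | h | h | h
    · exact ⟨0, h.symm⟩
    · exact ⟨1, h.symm⟩
    · exact ⟨2, h.symm⟩
    · exact ⟨3, h.symm⟩
    · exact ⟨4, h.symm⟩
    · exact ⟨5, h.symm⟩
    · exact ⟨6, h.symm⟩
  have hpi : ∀ k, inp k ≠ p := by
    intro k
    fin_cases k
    · exact hinj.ne (a₁ := 1) (a₂ := 0) (by decide)
    · exact hinj.ne (a₁ := 2) (a₂ := 0) (by decide)
    · exact hinj.ne (a₁ := 3) (a₂ := 0) (by decide)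
  have hpo : ∀ k, out k ≠ p := by
    intro k
    fin_cases k
    · exact hinj.ne (a₁ := 4) (a₂ := 0) (by decide)
    · exact hinj.ne (a₁ := 5) (a₂ := 0) (by decide)
    · exact hinj.ne (a₁ := 6) (a₂ := 0) (by decide)
  have h01 : inp 0 ≠ inp 1 := hinj.ne (a₁ := 1) (a₂ := 2) (by decide)
  have h02 : inp 0 ≠ inp 2 := hinj.ne (a₁ := 1) (a₂ := 3) (by decide)
  have h12 : inp 1 ≠ inp 2 := hinj.ne (a₁ := 2) (a₂ := 3) (by decide)
  have hii : ∀ j k, j ≠ k → inp j ≠ inp k := by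
    intro j k hjk
    fin_cases j <;> fin_cases k <;> first | exact absurd rfl hjk | assumption | (apply Ne.symm; assumption)
  have hd : ∀ j k, j ≠ k → dd al be ga (inp j) (inp k) p ≠ 0 := fun j k hjk =>
    hgen _ _ _ (hii j k hjk) (hpi j) (hpi k)
  have key : ∀ a b : Fin 7, (fun n : Fin 6 =>
            if h : (n : ℕ) < 3 then eVec al be ga a b (uComp p (inp ⟨(n : ℕ), h⟩))
            else eVec al be ga a b
              (uComp p (out ⟨(n : ℕ) - 3, by have := n.isLt; omega⟩))) =
      auxG (ansatz al be ga p inp out)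
        (fun k => dd al be ga a (inp k) p * dd al be ga b (inp k) p) := by
    intro a b
    ext n
    refine Fin.addCases (m := 3) (n := 3) (fun i => ?_) (fun i => ?_) n
    · simp [auxG, aux_eVec al be ga a b p _ (hpi _).symm]
    · have := aux_interp al be ga a b (out i) (inp 0) (inp 1) (inp 2) p
        (hd _ _ (by decide)) (hd _ _ (by decide)) (hd _ _ (by decide))
      simp [-Fin.natAdd_eq_addNat, auxG, aux_eVec al be ga a b p _ (hpo _).symm,
        Matrix.vecMul, dotProduct, Fin.sum_univ_three, ansatz]
      exact this
  have hself : ∀ x, dd al be ga x x p = 0 := by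
    intro x
    simp only [dd, Matrix.det_fin_three]
    simp
    try ring
  ext w
  simp only [SetLike.mem_coe, Set.mem_setOf_eq]
  constructor
  · intro hw
    have hle : w ∈ LinearMap.range (auxG (ansatz al be ga p inp out)) := by
      refine Submodule.span_le.2 ?_ hw
      rintro _ ⟨a, b, -, -, -, rfl⟩
      rw [key]
      exact ⟨_, rfl⟩
    obtain ⟨v, rfl⟩ := hle
    exact ⟨v, rfl⟩
  · rintro ⟨v, rfl⟩
    change auxG (ansatz al be ga p inp out) v ∈ _
    rw [pi_eq_sum_univ v, map_sum]
    refine Submodule.sum_mem _ fun k _ => ?_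
    rw [map_smul]
    refine Submodule.smul_mem _ _ ?_
    have n1 : k + 1 ≠ k := by fin_cases k <;> decide
    have n2 : k + 2 ≠ k := by fin_cases k <;> decide
    have n3 : k + 1 ≠ k + 2 := by fin_cases k <;> decide
    have n4 : ∀ j, j = k ∨ j = k + 1 ∨ j = k + 2 := by fin_cases k <;> decide
    have e : (fun j => if k = j then (1 : F) else 0) =
        (dd al be ga (inp (k+1)) (inp k) p * dd al be ga (inp (k+2)) (inp k) p)⁻¹ •
        (fun j => dd al be ga (inp (k+1)) (inp j) p * dd al be ga (inp (k+2)) (inp j) p) := by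
      ext j
      rcases n4 j with h | h | h <;> subst h
      · have q1 := hd _ _ n1
        have q2 := hd _ _ n2
        simp only [if_true, Pi.smul_apply, smul_eq_mul]
        exact (inv_mul_cancel₀ (mul_ne_zero q1 q2)).symm
      · simp [n1.symm, hself]
      · simp [n2.symm, hself]
    rw [e, map_smul]
    refine Submodule.smul_mem _ _ (Submodule.subset_span ?_)
    exact ⟨inp (k+1), inp (k+2), hii _ _ n3, hpi _, hpi _, (key _ _).symm⟩
end
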